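/- arXiv:2101.08654 — 3 statements merged into one kernel-verified Lean document; each statement's English description precedes it below -/
import Mathlib

section
/- Assume Λ is not contained in any real line, and let U ⊆ D be open with −1 in the closure of U. Then for generic λ ∈ Ω (i.e., for all λ in a residual subset of Ω), the image f_λ(U) is a dense open subset of ℂ. -/
/-!
Since `Λ` is not contained in a line, its convex hull has an interior point `c`. For every `u` there
is then an `a ∈ Λ` such that `a - c` has a component along `u` bounded below, so if `R` is large,
`u - (a - c)` lies in a fixed ball of radius less than `R` whenever `‖u‖ ≤ R`. The point
`p = c / (1 - z)` is fixed by `v ↦ c + z v`; hence, once `‖z‖ < 1` is close to `1`, every `w` in the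
ball of radius `R` about `p` has the form `a + z v` with `a ∈ Λ` and `v` in the same ball. Iterating
writes `w` as `f_λ(z)`. As `z` tends to a point `ζ ≠ 1` of the unit circle, `p` stays bounded, so
every finite string of coefficients extends to some `λ` for which `f_λ` takes a prescribed value in
`U`. Testing against a countable base of `ℂ`, generic `λ` have dense images, so `f_λ` is not
constant and the open mapping theorem applies.
-/

open Bornology Filter Metric Set Topology

theorem dense_of_forall_inter_cylinder_nonempty {E : ℕ → Type*} [∀ n, TopologicalSpace (E n)]
    {S : Set (∀ n, E n)} (hS : ∀ x N, (S ∩ PiNat.cylinder x N).Nonempty) : Dense S := by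
  intro x
  choose y hyS hy using hS x
  have hlim : Tendsto y atTop (𝓝 x) := tendsto_pi_nhds.2 fun n =>
    tendsto_const_nhds.congr' <| (eventually_gt_atTop n).mono fun N hN => (hy N n hN).symm
  exact mem_closure_of_tendsto hlim (Eventually.of_forall hyS)

theorem setOf_dense_image_mem_residual {X Y Z : Type*} [TopologicalSpace X] [TopologicalSpace Y]
    [SecondCountableTopology Y] {F : X → Z → Y} {U : Set Z}
    (hcont : ∀ z ∈ U, Continuous fun x => F x z)
    (hdense : ∀ V : Set Y, IsOpen V → V.Nonempty → Dense {x | (V ∩ F x '' U).Nonempty}) :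
    {x | Dense (F x '' U)} ∈ residual X := by
  let B := TopologicalSpace.countableBasis Y
  have hmeets : ∀ V ∈ B, {x | (V ∩ F x '' U).Nonempty} ∈ residual X := by
    intro V hV
    have hVo : IsOpen V := TopologicalSpace.isOpen_of_mem_countableBasis hV
    have hunion : {x | (V ∩ F x '' U).Nonempty} = ⋃ z ∈ U, (fun x => F x z) ⁻¹' V := by
      ext x
      simp [Set.Nonempty, and_comm]
    refine residual_of_dense_open ?_
      (hdense V hVo (TopologicalSpace.nonempty_of_mem_countableBasis hV))
    rw [hunion]
    exact isOpen_biUnion fun z hz => hVo.preimage (hcont z hz)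
  filter_upwards [(countable_bInter_mem (TopologicalSpace.countable_countableBasis Y)).2 hmeets]
    with x hx
  exact (TopologicalSpace.isBasis_countableBasis Y).dense_iff.2 fun V hV _ => mem_iInter₂.1 hx V hV

theorem isOpen_image_of_dense_of_analyticOnNhd {g : ℂ → ℂ} {D U : Set ℂ} (hg : AnalyticOnNhd ℂ g D)
    (hD : IsPreconnected D) (hUD : U ⊆ D) (hU : IsOpen U) (hdense : Dense (g '' U)) :
    IsOpen (g '' U) := by
  refine (hg.is_constant_or_isOpen hD).elim (fun ⟨c, hc⟩ => ?_) fun h => h U hUD hU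
  have hconst : g '' U ⊆ {c} := image_subset_iff.2 fun z hz => hc z (hUD hz)
  have hclosure : closure {c} = univ := (hdense.mono hconst).closure_eq
  exact absurd (closure_singleton.symm.trans hclosure) (singleton_ne_univ c)

theorem continuous_tsum_mul_pow {𝕜 : Type*} [NormedField 𝕜] [CompleteSpace 𝕜] {Λ : Set 𝕜}
    (hΛ : IsBounded Λ) {z : 𝕜} (hz : ‖z‖ < 1) :
    Continuous fun a : ℕ → Λ => ∑' n, (a n : 𝕜) * z ^ n := by
  obtain ⟨M, hM⟩ := hΛ.exists_norm_le
  refine continuous_tsum (fun n => by fun_prop)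
    ((summable_geometric_of_lt_one (norm_nonneg z) hz).mul_left M) fun n a => ?_
  rw [norm_mul, norm_pow]
  gcongr
  exact hM _ (a n).2

theorem analyticOnNhd_tsum_mul_pow {𝕜 : Type*} [NontriviallyNormedField 𝕜] [CompleteSpace 𝕜]
    {a : ℕ → 𝕜} (ha : IsBounded (range a)) :
    AnalyticOnNhd 𝕜 (fun z => ∑' n, a n * z ^ n) (ball 0 1) := by
  obtain ⟨M, hM⟩ := ha.exists_norm_le
  let p := FormalMultilinearSeries.ofScalars 𝕜 a
  have hradius : 1 ≤ p.radius := p.le_radius_of_bound M fun n => by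
    simpa [p] using hM (a n) (mem_range_self n)
  have hp : AnalyticOnNhd 𝕜 p.sum (eball 0 p.radius) :=
    (p.hasFPowerSeriesOnBall (one_pos.trans_le hradius)).analyticOnNhd
  have hsum : p.sum = fun z => ∑' n, a n * z ^ n := FormalMultilinearSeries.ofScalarsSum_eq_tsum a
  rw [← hsum]
  refine hp.mono ?_
  rw [← eball_ofReal, ENNReal.ofReal_one]
  exact eball_subset_eball hradius

theorem hasSum_sub_succ_of_summable_norm {E : Type*} [NormedAddCommGroup E] {f : ℕ → E}
    (hf : Summable fun n => ‖f n‖) : HasSum (fun n => f n - f (n + 1)) (f 0) := by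
  have hlim : Tendsto f atTop (𝓝 0) := tendsto_zero_iff_norm_tendsto_zero.2 hf.tendsto_atTop_zero
  have hnorm : Summable fun n => ‖f n - f (n + 1)‖ :=
    .of_nonneg_of_le (fun _ => norm_nonneg _) (fun n => norm_sub_le _ _)
      (hf.add ((summable_nat_add_iff 1).2 hf))
  refine (hasSum_iff_tendsto_nat_of_summable_norm hnorm).2 ?_
  simp only [Finset.sum_range_sub']
  simpa only [sub_zero] using hlim.const_sub (f 0)

theorem exists_hasSum_mul_pow_of_forall_eq_add_mul {𝕜 : Type*} [NormedField 𝕜] {Λ K : Set 𝕜} {z : 𝕜}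
    (hz : ‖z‖ < 1) (hK : IsBounded K) (hstep : ∀ w ∈ K, ∃ a ∈ Λ, ∃ v ∈ K, w = a + z * v)
    {w : 𝕜} (hw : w ∈ K) : ∃ a : ℕ → Λ, HasSum (fun n => (a n : 𝕜) * z ^ n) w := by
  choose digit hdigit rest hrest hsplit using hstep
  obtain ⟨M, hM⟩ := hK.exists_norm_le
  obtain ⟨x, hx_zero, hx_succ⟩ : ∃ x : ℕ → K, x 0 = ⟨w, hw⟩ ∧
      ∀ n, (x (n + 1) : 𝕜) = rest (x n) (x n).2 :=
    ⟨fun n => Nat.rec ⟨w, hw⟩ (fun _ v => ⟨rest v v.2, hrest v v.2⟩) n, rfl, fun _ => rfl⟩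
  let a : ℕ → Λ := fun n => ⟨digit (x n) (x n).2, hdigit _ _⟩
  have hterm (n : ℕ) : (a n : 𝕜) * z ^ n = x n * z ^ n - x (n + 1) * z ^ (n + 1) := by
    have h : (x n : 𝕜) = a n + z * x (n + 1) := by rw [hx_succ]; exact hsplit _ _
    linear_combination -z ^ n * h
  have hsummable : Summable fun n => ‖(x n : 𝕜) * z ^ n‖ := by
    refine .of_nonneg_of_le (fun _ => norm_nonneg _) (fun n => ?_)
      ((summable_geometric_of_lt_one (norm_nonneg z) hz).mul_left M)
    rw [norm_mul, norm_pow]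
    gcongr
    exact hM _ (x n).2
  refine ⟨a, ?_⟩
  simpa only [hterm, hx_zero, pow_zero, mul_one] using hasSum_sub_succ_of_summable_norm hsummable

theorem exists_mem_cylinder_hasSum_mul_pow {R : Type*} [CommRing R] [TopologicalSpace R]
    [IsTopologicalRing R] {Λ : Set R} (a b : ℕ → Λ) (N : ℕ) {z v : R}
    (hb : HasSum (fun n => (b n : R) * z ^ n) v) :
    ∃ l ∈ PiNat.cylinder a N, HasSum (fun n => (l n : R) * z ^ n)
      (∑ n ∈ Finset.range N, (a n : R) * z ^ n + z ^ N * v) := by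
  let l : ℕ → Λ := fun n => if n < N then a n else b (n - N)
  have hl : ∀ n < N, l n = a n := fun n hn => if_pos hn
  have htail (n : ℕ) : (l (n + N) : R) * z ^ (n + N) = z ^ N * (b n * z ^ n) := by
    simp only [l, not_lt.2 (Nat.le_add_left N n), if_false, Nat.add_sub_cancel]
    ring
  have hhead : ∑ n ∈ Finset.range N, (l n : R) * z ^ n = ∑ n ∈ Finset.range N, (a n : R) * z ^ n :=
    Finset.sum_congr rfl fun n hn => by rw [hl n (Finset.mem_range.1 hn)]
  refine ⟨l, hl, ?_⟩
  rw [add_comm, ← hhead, ← hasSum_nat_add_iff]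
  simpa only [htail] using hb.mul_left (z ^ N)

section Contraction

variable {E : Type*} [NormedAddCommGroup E] [InnerProductSpace ℝ E]

theorem exists_le_inner_of_closedBall_subset_convexHull {s : Set E} {c : E} {δ : ℝ} (hδ : 0 ≤ δ)
    (hs : closedBall c δ ⊆ convexHull ℝ s) (u : E) : ∃ a ∈ s, δ * ‖u‖ ≤ inner ℝ u (a - c) := by
  let x := c + (δ * ‖u‖⁻¹) • u
  have hx : x ∈ convexHull ℝ s := by
    refine hs ?_
    rw [mem_closedBall_iff_norm, add_sub_cancel_left, norm_smul, norm_mul, norm_inv, norm_norm,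
      Real.norm_of_nonneg hδ, mul_assoc]
    exact mul_le_of_le_one_right hδ inv_mul_le_one
  have hconvex : ConvexOn ℝ univ (innerₗ E u) := (innerₗ E u).convexOn convex_univ
  obtain ⟨a, ha, hle⟩ := hconvex.exists_ge_of_mem_convexHull (subset_univ s) hx
  refine ⟨a, ha, ?_⟩
  have hxu : inner ℝ u x = inner ℝ u c + δ * ‖u‖ := by
    rw [inner_add_right, real_inner_smul_right, real_inner_self_eq_norm_sq, sq, mul_assoc,
      ← mul_assoc _ ‖u‖, inv_mul_mul_self]
  rw [inner_sub_right]
  simp only [innerₗ_apply_apply] at hle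
  linarith

theorem norm_sub_le_of_le_inner {u d : E} {δ M R ρ : ℝ} (hd : ‖d‖ ≤ M) (hu : ‖u‖ ≤ R)
    (hud : δ * ‖u‖ ≤ inner ℝ u d) (hMρ : M ≤ ρ) (hRρ : R ^ 2 - 2 * δ * R + M ^ 2 ≤ ρ ^ 2) :
    ‖u - d‖ ≤ ρ := by
  have hM : 0 ≤ M := (norm_nonneg d).trans hd
  have hsq : ‖u - d‖ ^ 2 ≤ ‖u‖ ^ 2 - 2 * δ * ‖u‖ + M ^ 2 := by
    have : ‖d‖ ^ 2 ≤ M ^ 2 := by gcongr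
    rw [norm_sub_sq_real]
    linarith
  refine le_of_sq_le_sq (hsq.trans ?_) (hM.trans hMρ)
  -- By convexity, `t² - 2δt + M²` is bounded on `[0, R]` by its values at the endpoints.
  rcases le_total ‖u‖ (2 * δ) with h | h
  · nlinarith [norm_nonneg u]
  · nlinarith [mul_nonneg (sub_nonneg.2 hu) (by linarith [norm_nonneg u] : 0 ≤ R + ‖u‖ - 2 * δ)]

theorem eventually_exists_lt_forall_norm_sub_le {s : Set E} (hs : IsBounded s) {c : E}
    (hc : c ∈ interior (convexHull ℝ s)) :
    ∀ᶠ R in atTop, ∃ ρ < R, ∀ u : E, ‖u‖ ≤ R → ∃ a ∈ s, ‖u - (a - c)‖ ≤ ρ := by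
  obtain ⟨δ, hδ, hball⟩ := nhds_basis_closedBall.mem_iff.1 (mem_interior_iff_mem_nhds.1 hc)
  obtain ⟨M, hM⟩ := hs.subset_closedBall c
  filter_upwards [eventually_gt_atTop M, eventually_gt_atTop 0,
    (tendsto_id.const_mul_atTop (show 0 < 2 * δ by positivity)).eventually_gt_atTop (M ^ 2)]
    with R hMR hR hlarge
  refine ⟨max M √(R ^ 2 - 2 * δ * R + M ^ 2), max_lt hMR ?_, fun u hu => ?_⟩
  · rw [Real.sqrt_lt' hR]
    simp only [id] at hlarge
    linarith
  · obtain ⟨a, ha, hle⟩ := exists_le_inner_of_closedBall_subset_convexHull hδ.le hball u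
    refine ⟨a, ha, norm_sub_le_of_le_inner (mem_closedBall_iff_norm.1 (hM ha)) hu hle
      (le_max_left _ _) ?_⟩
    exact (Real.sqrt_le_iff.1 (le_max_right _ _)).2

end Contraction

theorem exists_line_of_collinear {k V : Type*} [DivisionRing k] [AddCommGroup V] [Module k V]
    [Nontrivial V] {s : Set V} (hs : Collinear k s) :
    ∃ p v : V, v ≠ 0 ∧ ∀ x ∈ s, ∃ t : k, x = p + t • v := by
  obtain ⟨p, v, hv⟩ := (collinear_iff_exists_forall_eq_smul_vadd s).1 hs
  rcases eq_or_ne v 0 with rfl | hv0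
  · obtain ⟨e, he⟩ := exists_ne (0 : V)
    exact ⟨p, e, he, fun x hx => ⟨0, by simpa using hv x hx⟩⟩
  · exact ⟨p, v, hv0, fun x hx => by simpa [add_comm] using hv x hx⟩

theorem affineSpan_eq_top_of_not_collinear {k V P : Type*} [DivisionRing k] [AddCommGroup V]
    [Module k V] [AddTorsor V P] (hV : Module.finrank k V = 2) {s : Set P}
    (hs : ¬ Collinear k s) : affineSpan k s = ⊤ := by
  have : FiniteDimensional k V := .of_finrank_pos (by omega)
  have hne : s.Nonempty := nonempty_iff_ne_empty.2 fun h => hs (h ▸ collinear_empty k P)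
  rw [AffineSubspace.affineSpan_eq_top_iff_vectorSpan_eq_top_of_nonempty k V P hne]
  rw [collinear_iff_finrank_le_one, not_le] at hs
  exact Submodule.eq_top_of_finrank_eq (le_antisymm (Submodule.finrank_le _) (by omega))

section Values

variable {Λ : Set ℂ}

theorem eventually_forall_mem_closedBall_exists_hasSum (hΛ : IsBounded Λ) {c : ℂ}
    (hc : c ∈ interior (convexHull ℝ Λ)) :
    ∀ᶠ R in atTop, ∃ r < 1, ∀ z : ℂ, r < ‖z‖ → ‖z‖ < 1 → ∀ w ∈ closedBall (c / (1 - z)) R,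
      ∃ a : ℕ → Λ, HasSum (fun n => (a n : ℂ) * z ^ n) w := by
  filter_upwards [eventually_exists_lt_forall_norm_sub_le hΛ hc, eventually_gt_atTop 0]
    with R ⟨ρ, hρR, hshrink⟩ hR
  refine ⟨max (ρ / R) 0, max_lt ((div_lt_one hR).2 hρR) one_pos, fun z hrz hz w hw => ?_⟩
  obtain ⟨hρz, hz0⟩ := max_lt_iff.1 hrz
  refine exists_hasSum_mul_pow_of_forall_eq_add_mul hz isBounded_closedBall (fun w hw => ?_) hw
  obtain ⟨a, ha, hle⟩ := hshrink (w - c / (1 - z)) (mem_closedBall_iff_norm.1 hw)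
  have hz_ne : z ≠ 0 := norm_pos_iff.1 hz0
  have hz_ne_one : 1 - z ≠ 0 := sub_ne_zero.2 fun h => by simp [← h] at hz
  refine ⟨a, ha, (w - a) / z, ?_, by field_simp; ring⟩
  have hsub : (w - a) / z - c / (1 - z) = (w - c / (1 - z) - (a - c)) / z := by
    field_simp
    ring
  rw [mem_closedBall_iff_norm, hsub, norm_div, div_le_iff₀ hz0]
  exact hle.trans (by rw [mul_comm]; exact ((div_lt_iff₀ hR).1 hρz).le)

theorem exists_mem_cylinder_hasSum_of_mem_closure (hΛ : IsBounded Λ) (hline : ¬ Collinear ℝ Λ)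
    {U : Set ℂ} (hUD : U ⊆ ball 0 1) {ζ : ℂ} (hζ : ‖ζ‖ = 1) (hζ_one : ζ ≠ 1) (hζU : ζ ∈ closure U)
    (w : ℂ) (a : ℕ → Λ) (N : ℕ) :
    ∃ l ∈ PiNat.cylinder a N, ∃ z ∈ U, HasSum (fun n => (l n : ℂ) * z ^ n) w := by
  obtain ⟨c, hc⟩ : (interior (convexHull ℝ Λ)).Nonempty :=
    interior_convexHull_nonempty_iff_affineSpan_eq_top.2
      (affineSpan_eq_top_of_not_collinear Complex.finrank_real_complex hline)
  have hζ_ne : ζ ≠ 0 := norm_ne_zero_iff.1 (by simp [hζ])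
  let P : ℂ → ℂ := fun z => ∑ n ∈ Finset.range N, (a n : ℂ) * z ^ n
  let Q : ℂ → ℂ := fun z => (w - P z) / z ^ N
  let err : ℂ → ℝ := fun z => ‖Q z - c / (1 - z)‖
  have herr : ContinuousAt err ζ := by
    have : 1 - ζ ≠ 0 := sub_ne_zero.2 hζ_one.symm
    have : ζ ^ N ≠ 0 := pow_ne_zero N hζ_ne
    fun_prop (disch := assumption)
  obtain ⟨R, ⟨r, hr, hvalues⟩, hR⟩ :=
    ((eventually_forall_mem_closedBall_exists_hasSum hΛ hc).and
      (eventually_gt_atTop (err ζ))).exists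
  have hnear : ∀ᶠ z in 𝓝 ζ, err z < R ∧ r < ‖z‖ ∧ z ≠ 0 :=
    (herr.eventually_lt_const hR).and <|
      (continuousAt_id.norm.eventually_const_lt (hr.trans_eq hζ.symm)).and
        (eventually_ne_nhds hζ_ne)
  obtain ⟨z, hzU, hzR, hrz, hz0⟩ :=
    ((mem_closure_iff_frequently.1 hζU).and_eventually hnear).exists
  obtain ⟨b, hb⟩ := hvalues z hrz (mem_ball_zero_iff.1 (hUD hzU)) (Q z)
    (mem_closedBall_iff_norm.2 hzR.le)
  obtain ⟨l, hl, hsum⟩ := exists_mem_cylinder_hasSum_mul_pow a b N hb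
  refine ⟨l, hl, z, hzU, ?_⟩
  rwa [mul_div_cancel₀ _ (pow_ne_zero N hz0), add_sub_cancel] at hsum

end Values

theorem stmt_1_general {Λ : Set ℂ} (hΛ : IsBounded Λ) (hline : ¬ Collinear ℝ Λ) {U : Set ℂ}
    (hU : IsOpen U) (hUD : U ⊆ ball 0 1) {ζ : ℂ} (hζ : ‖ζ‖ = 1) (hζ_one : ζ ≠ 1)
    (hζU : ζ ∈ closure U) :
    {a : ℕ → Λ | Dense ((fun z : ℂ => ∑' n, (a n : ℂ) * z ^ n) '' U) ∧
      IsOpen ((fun z : ℂ => ∑' n, (a n : ℂ) * z ^ n) '' U)} ∈ residual (ℕ → Λ) := by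
  have hdense : {a : ℕ → Λ | Dense ((fun z : ℂ => ∑' n, (a n : ℂ) * z ^ n) '' U)} ∈
      residual (ℕ → Λ) := by
    refine setOf_dense_image_mem_residual
      (fun z hz => continuous_tsum_mul_pow hΛ (mem_ball_zero_iff.1 (hUD hz))) ?_
    rintro V - ⟨w, hw⟩
    refine dense_of_forall_inter_cylinder_nonempty fun a N => ?_
    obtain ⟨l, hl, z, hz, hsum⟩ :=
      exists_mem_cylinder_hasSum_of_mem_closure hΛ hline hUD hζ hζ_one hζU w a N
    exact ⟨l, ⟨w, hw, z, hz, hsum.tsum_eq⟩, hl⟩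
  filter_upwards [hdense] with a ha
  have hbounded : IsBounded (range fun n => (a n : ℂ)) :=
    hΛ.subset (range_subset_iff.2 fun n => (a n).2)
  exact ⟨ha, isOpen_image_of_dense_of_analyticOnNhd (analyticOnNhd_tsum_mul_pow hbounded)
    (convex_ball 0 1).isPreconnected hUD hU ha⟩

/-- If `Λ` is not contained in any real line (a one-dimensional real affine
subspace of `ℂ`), and `U ⊆ D` is open with `-1` in the closure of `U`, then for generic
`λ ∈ Ω` the image `f_λ(U)` is dense and open in `ℂ`. -/
theorem stmt_1 (Λ : Set ℂ) (hΛbd : Bornology.IsBounded Λ) (hΛ2 : Λ.Nontrivial)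
    [BaireSpace (ℕ → Λ)]
    (hline : ¬ ∃ p v : ℂ, v ≠ 0 ∧ ∀ x ∈ Λ, ∃ t : ℝ, x = p + (t : ℂ) * v)
    (U : Set ℂ) (hUopen : IsOpen U) (hUD : U ⊆ Metric.ball (0 : ℂ) 1)
    (hcl : (-1 : ℂ) ∈ closure U) :
    { lam : ℕ → Λ |
        Dense ((fun z : ℂ => ∑' n : ℕ, (lam n : ℂ) * z ^ n) '' U) ∧
        IsOpen ((fun z : ℂ => ∑' n : ℕ, (lam n : ℂ) * z ^ n) '' U) } ∈
      residual (ℕ → Λ) :=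
  stmt_1_general hΛbd (fun h => hline (exists_line_of_collinear h)) hUopen hUD (by simp)
    (by norm_num) hcl
end

section
/- Assume Λ is contained in a real line. Then there exists an open set U ⊆ D with −1 in the closure of U and a closed real half-plane H ⊆ ℂ such that for every λ ∈ Ω, the image f_λ(U) is disjoint from H. -/
/-!
Let `Λ ⊆ p + ℝ v`. After multiplication by `v⁻¹`, each `f_λ` becomes `v⁻¹ p / (1 - z)` plus a power
series with bounded real coefficients. The first term is bounded near `-1`. The second is real on
the real axis, and by `|Im (z ^ (n + 1))| ≤ (n + 1) |z| ^ n |Im z|` its imaginary part is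
`O(|Im z| / (1 - |z|) ^ 2)`. Hence the imaginary part of `v⁻¹ f_λ` is bounded, uniformly in `λ`,
on a cusp at `-1` where `|Im z| < (1 - |z|) ^ 2`.
-/

lemma summable_mul_pow_of_norm_le {R : Type*} [NormedRing R] [NormOneClass R] [CompleteSpace R]
    {a : ℕ → R} {C : ℝ} (ha : ∀ n, ‖a n‖ ≤ C) {x : R} (hx : ‖x‖ < 1) :
    Summable fun n ↦ a n * x ^ n := by
  refine .of_norm_bounded ((summable_geometric_of_lt_one (norm_nonneg x) hx).mul_left C) fun n ↦ ?_
  calc ‖a n * x ^ n‖ ≤ ‖a n‖ * ‖x ^ n‖ := norm_mul_le _ _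
    _ ≤ C * ‖x‖ ^ n := by gcongr; exacts [(norm_nonneg _).trans (ha 0), ha n, norm_pow_le x n]

lemma tsum_add_mul_mul_pow {K : Type*} [NormedField K] {p v z : K} {a : ℕ → K} (hz : ‖z‖ < 1)
    (ha : Summable fun n ↦ a n * z ^ n) :
    ∑' n, (p + a n * v) * z ^ n = p * (1 - z)⁻¹ + v * ∑' n, a n * z ^ n := by
  have h := ((hasSum_geometric_of_norm_lt_one hz).mul_left p).add (ha.hasSum.mul_left v)
  rw [← h.tsum_eq]
  exact tsum_congr fun n ↦ by ring

lemma abs_im_pow_succ_le (z : ℂ) (n : ℕ) :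
    |(z ^ (n + 1)).im| ≤ (n + 1) * ‖z‖ ^ n * |z.im| := by
  induction n with
  | zero => simp
  | succ n ih =>
    calc |(z ^ (n + 2)).im| = |(z ^ (n + 1)).re * z.im + (z ^ (n + 1)).im * z.re| := by
          rw [pow_succ, Complex.mul_im]
      _ ≤ |(z ^ (n + 1)).re| * |z.im| + |(z ^ (n + 1)).im| * |z.re| := by
          exact (abs_add_le _ _).trans_eq (by rw [abs_mul, abs_mul])
      _ ≤ ‖z‖ ^ (n + 1) * |z.im| + (n + 1) * ‖z‖ ^ n * |z.im| * ‖z‖ := by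
          gcongr
          · exact (Complex.abs_re_le_norm _).trans_eq (norm_pow z _)
          · exact Complex.abs_re_le_norm z
      _ = ((n + 1 : ℕ) + 1) * ‖z‖ ^ (n + 1) * |z.im| := by push_cast; ring

lemma abs_im_tsum_ofReal_mul_pow_le {t : ℕ → ℝ} {T : ℝ} (ht : ∀ n, |t n| ≤ T) {z : ℂ}
    (hz : ‖z‖ < 1) :
    |(∑' n, (t n : ℂ) * z ^ n).im| ≤ T * |z.im| / (1 - ‖z‖) ^ 2 := by
  have hsum : Summable fun n ↦ (t n : ℂ) * z ^ n :=
    summable_mul_pow_of_norm_le (fun n ↦ (Complex.norm_real (t n)).trans_le (ht n)) hz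
  have him : (∑' n, (t n : ℂ) * z ^ n).im = ∑' n, t (n + 1) * (z ^ (n + 1)).im := by
    rw [Complex.im_tsum hsum, (Complex.hasSum_im hsum.hasSum).summable.tsum_eq_zero_add]
    simp only [Complex.im_ofReal_mul, pow_zero, Complex.one_im, mul_zero, zero_add]
  have hmajorant : HasSum (fun n : ℕ ↦ T * |z.im| * ((n + 1) * ‖z‖ ^ n))
      (T * |z.im| / (1 - ‖z‖) ^ 2) := by
    simpa [div_eq_mul_inv] using
      (hasSum_choose_mul_geometric_of_norm_lt_one 1
        ((norm_norm z).trans_lt hz)).mul_left (T * |z.im|)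
  rw [him, ← Real.norm_eq_abs]
  refine tsum_of_norm_bounded hmajorant fun n ↦ ?_
  calc ‖t (n + 1) * (z ^ (n + 1)).im‖ = |t (n + 1)| * |(z ^ (n + 1)).im| := abs_mul _ _
    _ ≤ T * ((n + 1) * ‖z‖ ^ n * |z.im|) := by
        gcongr
        exacts [(abs_nonneg _).trans (ht 0), ht _, abs_im_pow_succ_le z n]
    _ = T * |z.im| * ((n + 1) * ‖z‖ ^ n) := by ring

lemma exists_norm_le_of_add_smul_mem {𝕜 E : Type*} [NormedField 𝕜] [NormedAddCommGroup E]
    [NormedSpace 𝕜 E] {s : Set E} (hs : Bornology.IsBounded s) (p : E) {v : E} (hv : v ≠ 0) :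
    ∃ T : ℝ, ∀ t : 𝕜, p + t • v ∈ s → ‖t‖ ≤ T := by
  obtain ⟨M, hM⟩ := hs.exists_norm_le
  refine ⟨(M + ‖p‖) / ‖v‖, fun t ht ↦ (le_div_iff₀ (norm_pos_iff.2 hv)).2 ?_⟩
  calc ‖t‖ * ‖v‖ = ‖p + t • v - p‖ := by rw [add_sub_cancel_left, norm_smul]
    _ ≤ ‖p + t • v‖ + ‖p‖ := norm_sub_le _ _
    _ ≤ M + ‖p‖ := by gcongr; exact hM _ ht

lemma norm_inv_one_sub_le_one {z : ℂ} (hz : z.re ≤ 0) : ‖(1 - z)⁻¹‖ ≤ 1 := by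
  rw [norm_inv]
  refine inv_le_one_of_one_le₀ ?_
  calc 1 ≤ (1 - z).re := by simpa using hz
    _ ≤ ‖1 - z‖ := Complex.re_le_norm _

/-- The part of the open unit disk with negative real part cut out by `|Im z| < (1 - |z|) ^ 2`: a
cusp at `-1` on which power series with bounded real coefficients have bounded imaginary part. -/
def cuspAtNegOne : Set ℂ := {z | ‖z‖ < 1 ∧ z.re < 0 ∧ |z.im| < (1 - ‖z‖) ^ 2}

namespace cuspAtNegOne

lemma isOpen : IsOpen cuspAtNegOne :=
  (isOpen_lt continuous_norm continuous_const).inter <|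
    (isOpen_lt Complex.continuous_re continuous_const).inter <|
      isOpen_lt Complex.continuous_im.abs ((continuous_const.sub continuous_norm).pow 2)

lemma subset_ball : cuspAtNegOne ⊆ Metric.ball 0 1 :=
  fun _ hz ↦ mem_ball_zero_iff.2 hz.1

lemma ofReal_mem {x : ℝ} (hx : x ∈ Set.Ioo (-1) 0) : (x : ℂ) ∈ cuspAtNegOne := by
  have hnorm : ‖(x : ℂ)‖ < 1 := by
    rw [Complex.norm_real, Real.norm_of_nonpos hx.2.le]
    exact neg_lt.1 hx.1
  refine ⟨hnorm, hx.2, ?_⟩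
  rw [Complex.ofReal_im, abs_zero]
  exact pow_pos (sub_pos.2 hnorm) 2

lemma neg_one_mem_closure : (-1 : ℂ) ∈ closure cuspAtNegOne := by
  have hIoo : (-1 : ℝ) ∈ closure (Set.Ioo (-1) 0) := by
    rw [closure_Ioo (by norm_num)]
    exact ⟨le_rfl, by norm_num⟩
  simpa using map_mem_closure Complex.continuous_ofReal hIoo fun _ ↦ ofReal_mem

lemma im_tsum_ofReal_mul_pow_le {z : ℂ} (hz : z ∈ cuspAtNegOne) {t : ℕ → ℝ} {T : ℝ}
    (ht : ∀ n, |t n| ≤ T) : (∑' n, (t n : ℂ) * z ^ n).im ≤ T := by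
  have hT : 0 ≤ T := (abs_nonneg _).trans (ht 0)
  calc (∑' n, (t n : ℂ) * z ^ n).im ≤ T * |z.im| / (1 - ‖z‖) ^ 2 :=
        (le_abs_self _).trans (abs_im_tsum_ofReal_mul_pow_le ht hz.1)
    _ ≤ T := div_le_of_le_mul₀ (sq_nonneg _) hT (by gcongr; exact hz.2.2.le)

lemma im_inv_mul_tsum_le {z : ℂ} (hz : z ∈ cuspAtNegOne) (p : ℂ) {v : ℂ} (hv : v ≠ 0)
    {t : ℕ → ℝ} {T : ℝ} (ht : ∀ n, |t n| ≤ T) :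
    (v⁻¹ * ∑' n, (p + t n * v) * z ^ n).im ≤ ‖v⁻¹ * p‖ + T := by
  have hsum : Summable fun n ↦ (t n : ℂ) * z ^ n :=
    summable_mul_pow_of_norm_le (fun n ↦ (Complex.norm_real (t n)).trans_le (ht n)) hz.1
  have hgeom : (v⁻¹ * p * (1 - z)⁻¹).im ≤ ‖v⁻¹ * p‖ :=
    calc (v⁻¹ * p * (1 - z)⁻¹).im ≤ ‖v⁻¹ * p‖ * ‖(1 - z)⁻¹‖ :=
          (Complex.im_le_norm _).trans_eq (norm_mul _ _)
      _ ≤ ‖v⁻¹ * p‖ := mul_le_of_le_one_right (norm_nonneg _) (norm_inv_one_sub_le_one hz.2.1.le)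
  rw [tsum_add_mul_mul_pow hz.1 hsum, mul_add, inv_mul_cancel_left₀ hv, ← mul_assoc, Complex.add_im]
  exact add_le_add hgeom (im_tsum_ofReal_mul_pow_le hz ht)

end cuspAtNegOne

/-- If `Λ` is contained in a real line, then there exists an open `U ⊆ D`
with `-1 ∈ closure U` and a closed real half-plane `H = {w : c ≤ Im (u * w)}` (with
`u ≠ 0`) such that for every `λ ∈ Ω` the image `f_λ(U)` is disjoint from `H`. -/
theorem stmt_2 (Λ : Set ℂ) (hΛbd : Bornology.IsBounded Λ) (hΛ2 : Λ.Nontrivial)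
    (hline : ∃ p v : ℂ, v ≠ 0 ∧ ∀ x ∈ Λ, ∃ t : ℝ, x = p + (t : ℂ) * v) :
    ∃ U : Set ℂ, IsOpen U ∧ U ⊆ Metric.ball (0 : ℂ) 1 ∧ (-1 : ℂ) ∈ closure U ∧
      ∃ u : ℂ, u ≠ 0 ∧ ∃ c : ℝ,
        ∀ lam : ℕ → ℂ, (∀ n, lam n ∈ Λ) →
          Disjoint ((fun z : ℂ => ∑' n : ℕ, lam n * z ^ n) '' U)
            {w : ℂ | c ≤ (u * w).im} := by
  obtain ⟨p, v, hv, hline⟩ := hline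
  obtain ⟨T, hT⟩ := exists_norm_le_of_add_smul_mem (𝕜 := ℝ) hΛbd p hv
  refine ⟨cuspAtNegOne, cuspAtNegOne.isOpen, cuspAtNegOne.subset_ball,
    cuspAtNegOne.neg_one_mem_closure, v⁻¹, inv_ne_zero hv, ‖v⁻¹ * p‖ + T + 1, fun lam hlam ↦ ?_⟩
  choose t ht using fun n ↦ hline (lam n) (hlam n)
  obtain rfl : lam = fun n ↦ p + t n * v := funext ht
  have ht_le (n : ℕ) : |t n| ≤ T := hT (t n) (by simpa only [Complex.real_smul] using hlam n)
  rw [Set.disjoint_left]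
  rintro _ ⟨z, hz, rfl⟩ hmem
  have hle := cuspAtNegOne.im_inv_mul_tsum_le hz p hv ht_le
  exact absurd (hmem.trans hle) (lt_add_one _).not_ge
end

section
/- Let g : D → ℂ be defined by g(z) = ∑_{k=0}^∞ z^{2k+1} = z/(1 − z²) on the open unit disk D = {z ∈ ℂ : |z| < 1}. Then the image g(D) is dense in ℂ, while the image of D under the function z ↦ g(z) − (1/2)·1/(1 − z) = −1/(2(1 + z)) is not dense in ℂ. In particular, there exists a sequence λ = (λ_n)_{n≥0} with λ_n ∈ {0,1} such that f_λ(D) is dense in ℂ but f_{λ − 1/2}(D) is not dense in ℂ. -/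
/-!
Write `g z = z / (1 - z ^ 2)`. Every `w : ℂ` is a value of `g`, since `g z = w` is a quadratic
equation for `z`. As `g (-z⁻¹) = g z`, the solution can be taken in the closed unit disk, and since
`g` is purely imaginary on the unit circle, in the open disk whenever `w.re ≠ 0`.
On the other hand, `z ↦ -1 / (2 * (1 + z))` maps the disk into the left half-plane.
-/

open Metric ComplexConjugate

section Field

variable {K : Type*} [Field K]

theorem div_one_sub_sq_surjective [IsAlgClosed K] :
    Function.Surjective fun z : K => z / (1 - z ^ 2) := by
  intro w
  rcases eq_or_ne w 0 with rfl | hw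
  · exact ⟨0, by simp⟩
  open Polynomial in
  obtain ⟨z, hroot⟩ := IsAlgClosed.exists_root (C w * X ^ 2 + C 1 * X + C (-w))
    (by rw [degree_quadratic hw]; decide)
  have hz : w * z ^ 2 + z - w = 0 := by simpa [← sub_eq_add_neg] using hroot
  have hden : 1 - z ^ 2 ≠ 0 := by
    intro h
    have hz0 : z = 0 := by linear_combination hz + w * h
    simp [hz0] at h
  exact ⟨z, (div_eq_iff hden).2 (by linear_combination hz)⟩

theorem neg_inv_div_one_sub_neg_inv_sq (z : K) :
    -z⁻¹ / (1 - (-z⁻¹) ^ 2) = z / (1 - z ^ 2) := by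
  rcases eq_or_ne z 0 with rfl | hz
  · simp
  have hden : 1 - (-z⁻¹) ^ 2 = -z⁻¹ * ((1 - z ^ 2) / z) := by
    field_simp
    ring
  rw [hden, div_mul_cancel_left₀ (neg_ne_zero.2 (inv_ne_zero hz)), inv_div]

theorem ite_odd_sub_half [NeZero (2 : K)] (n : ℕ) :
    (if Odd n then 1 else 0) - 1 / 2 = -1 / 2 * (-1 : K) ^ n := by
  rcases n.even_or_odd with heven | hodd
  · rw [if_neg (Nat.not_odd_iff_even.2 heven), heven.neg_one_pow]
    ring
  · rw [if_pos hodd, hodd.neg_one_pow]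
    field_simp
    ring

end Field

theorem re_div_one_sub_sq_eq_zero {z : ℂ} (hz : ‖z‖ = 1) : (z / (1 - z ^ 2)).re = 0 := by
  have hconj : conj (z / (1 - z ^ 2)) = -(z / (1 - z ^ 2)) := by
    calc conj (z / (1 - z ^ 2)) = z⁻¹ / (1 - z⁻¹ ^ 2) := by
          simp only [map_div₀, map_sub, map_one, map_pow, Complex.inv_eq_conj hz]
      _ = -(-z⁻¹ / (1 - (-z⁻¹) ^ 2)) := by rw [neg_sq, neg_div, neg_neg]
      _ = -(z / (1 - z ^ 2)) := by rw [neg_inv_div_one_sub_neg_inv_sq]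
  have hre := congrArg Complex.re hconj
  rw [Complex.conj_re, Complex.neg_re] at hre
  exact self_eq_neg.1 hre

theorem setOf_re_ne_zero_subset_image_div_one_sub_sq :
    {w : ℂ | w.re ≠ 0} ⊆ (fun z : ℂ => z / (1 - z ^ 2)) '' ball 0 1 := by
  intro w hw
  obtain ⟨z, rfl⟩ := div_one_sub_sq_surjective w
  rcases lt_trichotomy ‖z‖ 1 with hlt | heq | hgt
  · exact ⟨z, mem_ball_zero_iff.2 hlt, rfl⟩
  · exact absurd (re_div_one_sub_sq_eq_zero heq) hw
  · refine ⟨-z⁻¹, mem_ball_zero_iff.2 ?_, neg_inv_div_one_sub_neg_inv_sq z⟩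
    rw [norm_neg, norm_inv]
    exact inv_lt_one_of_one_lt₀ hgt

theorem dense_image_div_one_sub_sq :
    Dense ((fun z : ℂ => z / (1 - z ^ 2)) '' ball 0 1) :=
  ((dense_compl_singleton (0 : ℝ)).preimage Complex.isOpenMap_re).mono
    setOf_re_ne_zero_subset_image_div_one_sub_sq

theorem re_neg_one_div_two_mul_one_add_nonpos {z : ℂ} (hz : -1 ≤ z.re) :
    (-1 / (2 * (1 + z))).re ≤ 0 := by
  have hden : 0 ≤ (2 * (1 + z)).re := by
    simp only [Complex.mul_re, Complex.add_re, Complex.re_ofNat, Complex.im_ofNat, Complex.one_re]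
    linarith
  rw [neg_div, one_div, Complex.neg_re, Complex.inv_re, neg_nonpos]
  exact div_nonneg hden (Complex.normSq_nonneg _)

theorem not_dense_of_forall_re_le {s : Set ℂ} {c : ℝ} (hs : ∀ w ∈ s, w.re ≤ c) : ¬ Dense s := by
  intro hdense
  have hclosed : IsClosed {w : ℂ | w.re ≤ c} := isClosed_le Complex.continuous_re continuous_const
  have hmem : ((c + 1 : ℝ) : ℂ).re ≤ c := closure_minimal hs hclosed (hdense _)
  rw [Complex.ofReal_re] at hmem
  linarith

theorem not_dense_image_neg_one_div_two_mul_one_add :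
    ¬ Dense ((fun z : ℂ => -1 / (2 * (1 + z))) '' ball 0 1) := by
  refine not_dense_of_forall_re_le (c := 0) (Set.forall_mem_image.2 fun z hz => ?_)
  have hnorm : ‖z‖ < 1 := mem_ball_zero_iff.1 hz
  exact re_neg_one_div_two_mul_one_add_nonpos
    (neg_le_of_abs_le ((Complex.abs_re_le_norm z).trans hnorm.le))

section PowerSeries

variable {K : Type*} [NormedField K] {z : K}

theorem hasSum_ite_odd_mul_pow (hz : ‖z‖ < 1) :
    HasSum (fun n : ℕ => (if Odd n then 1 else 0) * z ^ n) (z / (1 - z ^ 2)) := by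
  have hinj : Function.Injective fun k : ℕ => 2 * k + 1 := fun a b h => by grind
  refine (hinj.hasSum_iff fun n hn => ?_).1 ?_
  · have hodd : ¬ Odd n := fun ⟨k, hk⟩ => hn ⟨k, hk.symm⟩
    rw [if_neg hodd, zero_mul]
  · have hsq : ‖z ^ 2‖ < 1 := by
      rw [norm_pow]
      exact pow_lt_one₀ (norm_nonneg z) hz two_ne_zero
    have hterm (k : ℕ) :
        (if Odd (2 * k + 1) then 1 else 0) * z ^ (2 * k + 1) = z * (z ^ 2) ^ k := by
      rw [if_pos (odd_two_mul_add_one k), one_mul, pow_succ', pow_mul]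
    simpa only [Function.comp_def, hterm, div_eq_mul_inv] using
      (hasSum_geometric_of_norm_lt_one hsq).mul_left z

theorem hasSum_ite_odd_sub_half_mul_pow [NeZero (2 : K)] (hz : ‖z‖ < 1) :
    HasSum (fun n : ℕ => ((if Odd n then 1 else 0) - 1 / 2) * z ^ n) (-1 / (2 * (1 + z))) := by
  have hneg : ‖-z‖ < 1 := by rwa [norm_neg]
  rw [← div_div]
  simpa only [ite_odd_sub_half, mul_assoc, ← mul_pow, neg_one_mul, sub_neg_eq_add,
    ← div_eq_mul_inv] using (hasSum_geometric_of_norm_lt_one hneg).mul_left (-1 / 2)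

end PowerSeries

/-- The image of the unit disk under `g(z) = z/(1 - z²)` is dense in `ℂ`,
while the image of the disk under `z ↦ -1/(2(1+z))` is not dense; in particular there is a
`{0,1}`-valued coefficient sequence `λ` (namely `λ_n = 1` for odd `n`, `0` for even `n`)
with `f_λ(D)` dense in `ℂ` but `f_{λ - 1/2}(D)` not dense in `ℂ`. -/
theorem stmt_16 :
    Dense ((fun z : ℂ => z / (1 - z ^ 2)) '' Metric.ball (0 : ℂ) 1) ∧
    ¬ Dense ((fun z : ℂ => -1 / (2 * (1 + z))) '' Metric.ball (0 : ℂ) 1) ∧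
    ∃ lam : ℕ → ℂ, (∀ n, lam n ∈ ({0, 1} : Set ℂ)) ∧
      Dense ((fun z : ℂ => ∑' n : ℕ, lam n * z ^ n) '' Metric.ball (0 : ℂ) 1) ∧
      ¬ Dense ((fun z : ℂ => ∑' n : ℕ, (lam n - 1 / 2) * z ^ n) ''
          Metric.ball (0 : ℂ) 1) := by
  refine ⟨dense_image_div_one_sub_sq, not_dense_image_neg_one_div_two_mul_one_add,
    fun n => if Odd n then 1 else 0, fun n => (ite_eq_or_eq (Odd n) 1 0).symm, ?_, ?_⟩
  · rw [Set.image_congr fun z hz => (hasSum_ite_odd_mul_pow (mem_ball_zero_iff.1 hz)).tsum_eq]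
    exact dense_image_div_one_sub_sq
  · rw [Set.image_congr fun z hz =>
      (hasSum_ite_odd_sub_half_mul_pow (mem_ball_zero_iff.1 hz)).tsum_eq]
    exact not_dense_image_neg_one_div_two_mul_one_add
end
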